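/- arXiv:2503.11454 — 5 statements merged into one kernel-verified Lean document; each statement's English description precedes it below -/
import Mathlib

section
/- For every 4×4 complex matrix ρ, the twirled matrix ρ̃ = (1/4) Σ_{i=0}^{3} (σᵢ⊗σᵢ) ρ (σᵢ⊗σᵢ) is diagonal in the Bell basis; precisely, ρ̃ = Σᵢ₌₁⁴ ⟨Ψᵢ| ρ |Ψᵢ⟩ Pᵢ. In particular, if ρ is a density matrix (positive semidefinite with trace 1), then ρ̃ is a Bell diagonal state with eigenvalues θᵢ = ⟨Ψᵢ|ρ|Ψᵢ⟩. -/
open Matrix Kronecker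
open scoped ComplexOrder

/-- The four Bell states as vectors in `ℂ² ⊗ ℂ²` (indexed by `Fin 2 × Fin 2`). -/
noncomputable def bell : Fin 4 → (Fin 2 × Fin 2) → ℂ :=
  ![fun p => (if p = (0,0) then 1 else if p = (1,1) then 1 else 0) / (Real.sqrt 2 : ℂ),
    fun p => (if p = (0,0) then 1 else if p = (1,1) then -1 else 0) / (Real.sqrt 2 : ℂ),
    fun p => (if p = (0,1) then 1 else if p = (1,0) then 1 else 0) / (Real.sqrt 2 : ℂ),
    fun p => (if p = (0,1) then 1 else if p = (1,0) then -1 else 0) / (Real.sqrt 2 : ℂ)]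

/-- The rank-one projector `|Ψᵢ⟩⟨Ψᵢ|` onto the `i`-th Bell state. -/
noncomputable def bellProj (i : Fin 4) : Matrix (Fin 2 × Fin 2) (Fin 2 × Fin 2) ℂ :=
  Matrix.vecMulVec (bell i) (star (bell i))

/-- The Pauli matrices `σ₀ = I, σ₁, σ₂, σ₃`. -/
def pauli : Fin 4 → Matrix (Fin 2) (Fin 2) ℂ :=
  ![1, !![0, 1; 1, 0], !![0, -Complex.I; Complex.I, 0], !![1, 0; 0, -1]]

/-!
The Bell states are joint eigenvectors of the four matrices `σᵢ ⊗ σᵢ`, and the eigenvalues form a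
Hadamard matrix `s`. Writing `σᵢ ⊗ σᵢ = ∑ⱼ sᵢⱼ Pⱼ`, the twirl becomes
`(1/4) ∑ᵢ ∑ⱼ ∑ₖ sᵢⱼ sᵢₖ Pⱼ ρ Pₖ`, and the orthogonality `∑ᵢ sᵢⱼ sᵢₖ = 4 δⱼₖ` leaves only the
diagonal terms `Pⱼ ρ Pⱼ = ⟨Ψⱼ|ρ|Ψⱼ⟩ Pⱼ`.
-/

section ResolutionOfIdentity

variable {ι κ R α l m n o : Type*} [Fintype κ]

theorem sum_sum_smul_mul_sum_smul_of_transpose_mul_eq_smul_one [Fintype ι] [DecidableEq κ]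
    [Semiring R] [NonUnitalNonAssocSemiring α] [Module R α] [IsScalarTower R α α]
    [SMulCommClass R α α] {s t : Matrix ι κ R} {c : R} (hst : sᵀ * t = c • 1) (x y : κ → α) :
    ∑ i, (∑ j, s i j • x j) * (∑ k, t i k • y k) = c • ∑ j, x j * y j := by
  calc ∑ i, (∑ j, s i j • x j) * (∑ k, t i k • y k)
      = ∑ j, ∑ k, (sᵀ * t) j k • (x j * y k) := by
        simp only [Finset.sum_mul_sum, smul_mul_smul_comm, mul_apply, transpose_apply,
          Finset.sum_smul]
        rw [Finset.sum_comm]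
        exact Finset.sum_congr rfl fun j _ => Finset.sum_comm
    _ = c • ∑ j, x j * y j := by
        simp [hst, one_apply, Finset.smul_sum]

variable [Fintype m] [Fintype n]

theorem eq_sum_smul_vecMulVec_of_mulVec_eq_smul [DecidableEq n] [Semiring α] [SMul R α]
    [IsScalarTower R α α] {v w : κ → n → α} (hvw : ∑ j, vecMulVec (v j) (w j) = 1)
    {A : Matrix n n α} {c : κ → R} (hA : ∀ j, A *ᵥ v j = c j • v j) :
    A = ∑ j, c j • vecMulVec (v j) (w j) := by
  calc A = A * ∑ j, vecMulVec (v j) (w j) := by rw [hvw, mul_one]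
    _ = ∑ j, c j • vecMulVec (v j) (w j) := by
        simp only [Finset.mul_sum, mul_vecMulVec, hA, smul_vecMulVec]

theorem vecMulVec_mul_mul_vecMulVec [CommSemiring α] (u : l → α) (v : m → α) (w : n → α)
    (x : o → α) (M : Matrix m n α) :
    vecMulVec u v * M * vecMulVec w x = (v ⬝ᵥ M *ᵥ w) • vecMulVec u x := by
  rw [Matrix.mul_assoc, mul_vecMulVec, vecMulVec_mul_vecMulVec, vecMulVec_smul]

theorem trace_eq_sum_dotProduct_mulVec [DecidableEq n] [CommSemiring α] {v w : κ → n → α}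
    (hvw : ∑ j, vecMulVec (v j) (w j) = 1) (M : Matrix n n α) :
    M.trace = ∑ j, w j ⬝ᵥ M *ᵥ v j := by
  calc M.trace = (M * ∑ j, vecMulVec (v j) (w j)).trace := by rw [hvw, mul_one]
    _ = ∑ j, w j ⬝ᵥ M *ᵥ v j := by
        simp only [Finset.mul_sum, trace_sum, mul_vecMulVec, trace_vecMulVec, dotProduct_comm]

theorem sum_mul_mul_eq_smul_sum_dotProduct_smul_vecMulVec [Fintype ι] [DecidableEq κ]
    [DecidableEq n] [Semiring R] [CommSemiring α] [Module R α] [IsScalarTower R α α]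
    [SMulCommClass R α α] {v w : κ → n → α} (hvw : ∑ j, vecMulVec (v j) (w j) = 1)
    {s t : Matrix ι κ R} {c : R} (hst : sᵀ * t = c • 1) {A B : ι → Matrix n n α}
    (hA : ∀ i j, A i *ᵥ v j = s i j • v j)
    (hB : ∀ i j, B i *ᵥ v j = t i j • v j) (M : Matrix n n α) :
    ∑ i, A i * M * B i = c • ∑ j, (w j ⬝ᵥ M *ᵥ v j) • vecMulVec (v j) (w j) := by
  let P j := vecMulVec (v j) (w j)
  calc ∑ i, A i * M * B i = ∑ i, (∑ j, s i j • (P j * M)) * ∑ k, t i k • P k := by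
        refine Finset.sum_congr rfl fun i _ => ?_
        rw [eq_sum_smul_vecMulVec_of_mulVec_eq_smul hvw (hA i),
          eq_sum_smul_vecMulVec_of_mulVec_eq_smul hvw (hB i)]
        simp only [Finset.sum_mul, smul_mul_assoc, P]
    _ = c • ∑ j, P j * M * P j := sum_sum_smul_mul_sum_smul_of_transpose_mul_eq_smul_one hst _ _
    _ = c • ∑ j, (w j ⬝ᵥ M *ᵥ v j) • P j := by
        simp only [P, vecMulVec_mul_mul_vecMulVec]

end ResolutionOfIdentity

/-- The Hadamard matrix whose `(i, j)` entry is the eigenvalue `±1` of `σᵢ ⊗ σᵢ` on the Bell state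
`bell j`. The entries are integers so that its orthogonality relation is decidable. -/
def bellSign : Matrix (Fin 4) (Fin 4) ℤ :=
  !![1, 1, 1, 1; 1, -1, 1, -1; -1, 1, 1, -1; 1, 1, -1, -1]

theorem transpose_bellSign_mul_bellSign : bellSignᵀ * bellSign = (4 : ℤ) • 1 := by
  decide

theorem pauli_kronecker_pauli_mulVec_bell (i j : Fin 4) :
    (pauli i ⊗ₖ pauli i) *ᵥ bell j = bellSign i j • bell j := by
  ext ⟨a, b⟩
  fin_cases i <;> fin_cases j <;> fin_cases a <;> fin_cases b <;>
    simp [pauli, bell, bellSign, mulVec, dotProduct, Fintype.sum_prod_type, one_apply, neg_div]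

theorem sum_bellProj_eq_one : ∑ i, bellProj i = 1 := by
  have sqrt_two_inv_mul_self : (Real.sqrt 2 : ℂ)⁻¹ * (Real.sqrt 2 : ℂ)⁻¹ = 1 / 2 := by
    rw [← mul_inv, ← Complex.ofReal_mul, Real.mul_self_sqrt zero_le_two, one_div,
      Complex.ofReal_ofNat]
  ext ⟨a, b⟩ ⟨c, d⟩
  fin_cases a <;> fin_cases b <;> fin_cases c <;> fin_cases d <;>
    simp [Fin.sum_univ_four, bellProj, bell, vecMulVec_apply, div_eq_mul_inv,
      sqrt_two_inv_mul_self, one_apply] <;> norm_num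

theorem pauli_twirl_eq_sum_bellProj (ρ : Matrix (Fin 2 × Fin 2) (Fin 2 × Fin 2) ℂ) :
    (1/4 : ℂ) • ∑ i, (pauli i ⊗ₖ pauli i) * ρ * (pauli i ⊗ₖ pauli i)
      = ∑ i, (star (bell i) ⬝ᵥ ρ *ᵥ bell i) • bellProj i := by
  rw [sum_mul_mul_eq_smul_sum_dotProduct_smul_vecMulVec sum_bellProj_eq_one
    transpose_bellSign_mul_bellSign pauli_kronecker_pauli_mulVec_bell
    pauli_kronecker_pauli_mulVec_bell, ← Int.cast_smul_eq_zsmul ℂ, smul_smul]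
  norm_num [bellProj]

/-- The twirl `ρ̃ = (1/4) Σᵢ (σᵢ⊗σᵢ) ρ (σᵢ⊗σᵢ)` of an arbitrary 4×4 matrix `ρ` is diagonal
in the Bell basis: `ρ̃ = Σᵢ ⟨Ψᵢ|ρ|Ψᵢ⟩ |Ψᵢ⟩⟨Ψᵢ|`.  In particular, if `ρ` is a density matrix,
then `ρ̃` is a Bell diagonal state with eigenvalues `θᵢ = ⟨Ψᵢ|ρ|Ψᵢ⟩`. -/
theorem twirl_is_bell_diagonal (ρ : Matrix (Fin 2 × Fin 2) (Fin 2 × Fin 2) ℂ) :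
    ((1/4 : ℂ) • ∑ i : Fin 4, (pauli i ⊗ₖ pauli i) * ρ * (pauli i ⊗ₖ pauli i)
      = ∑ i : Fin 4, (star (bell i) ⬝ᵥ ρ.mulVec (bell i)) • bellProj i)
    ∧ (ρ.PosSemidef → ρ.trace = 1 →
        ∃ θ : Fin 4 → ℝ, (∀ i, 0 ≤ θ i) ∧ (∑ i, θ i = 1) ∧
          (∀ i, (θ i : ℂ) = star (bell i) ⬝ᵥ ρ.mulVec (bell i)) ∧
          (1/4 : ℂ) • ∑ i : Fin 4, (pauli i ⊗ₖ pauli i) * ρ * (pauli i ⊗ₖ pauli i)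
            = ∑ i : Fin 4, (θ i : ℂ) • bellProj i) := by
  refine ⟨pauli_twirl_eq_sum_bellProj ρ, fun hρ htr => ?_⟩
  have weight_nonneg (i : Fin 4) : 0 ≤ star (bell i) ⬝ᵥ ρ *ᵥ bell i :=
    hρ.dotProduct_mulVec_nonneg (bell i)
  choose θ θ_nonneg hθ using fun i => RCLike.nonneg_iff_exists_ofReal.mp (weight_nonneg i)
  have sum_θ : ((∑ i, θ i : ℝ) : ℂ) = 1 := by
    rw [← htr, trace_eq_sum_dotProduct_mulVec sum_bellProj_eq_one]
    simpa using Finset.sum_congr rfl fun i _ => hθ i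
  refine ⟨θ, θ_nonneg, by exact_mod_cast sum_θ, hθ, ?_⟩
  rw [pauli_twirl_eq_sum_bellProj]
  exact Finset.sum_congr rfl fun i _ => congrArg (· • bellProj i) (hθ i).symm
end

section
/- Fix N ≥ 1 and θ ∈ ℝ⁴ with θᵢ ≥ 0 and Σθᵢ = 1. Let X = (X₁,X₂,X₃,X₄) follow the multinomial distribution with parameters N and θ. Then the risk of the Bayesian mean estimator (under a uniform prior on the simplex) θ̂ᵢ = (Xᵢ+1)/(N+4) satisfies Σᵢ₌₁⁴ E[((Xᵢ+1)/(N+4) − θᵢ)²] = [N(1 − Σᵢθᵢ²) + 4(4Σᵢθᵢ² − 1)] / (N+4)². -/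
/-!
For weights `θ` of sum `1` on a finite set, the multinomial theorem gives
`∑ₓ w(x) ∏ⱼ zⱼ ^ xⱼ = (∑ⱼ θⱼ zⱼ) ^ N`. Putting `zᵢ = 1 + Y` and `zⱼ = 1` for `j ≠ i`, the
coefficients of `Y ^ r` are the binomial moments `E[Xᵢ choose r]`; those with `r ≤ 2` determine the
mean `N θᵢ` and the variance `N θᵢ (1 - θᵢ)`. For the estimator `(Xᵢ + a) / (N + A)` of `θᵢ`,
`(N + A) ((Xᵢ + a) / (N + A) - θᵢ) = (Xᵢ - N θᵢ) + (a - A θᵢ)`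
splits the error into a centred term and a constant, so the mean squared error is
`(N θᵢ (1 - θᵢ) + (a - A θᵢ) ^ 2) / (N + A) ^ 2`.
-/

open Finset Polynomial

theorem sq_eq_two_mul_choose_two_add (n : ℕ) : n ^ 2 = 2 * n.choose 2 + n := by
  induction n with
  | zero => rfl
  | succ n ih =>
    rw [Nat.choose_succ_succ' n 1, Nat.choose_one_right]
    linear_combination ih

section Moments

variable {ι R : Type*} [Fintype ι]

/-- The multinomial probability `(∑ⱼ xⱼ)! / ∏ⱼ xⱼ! * ∏ⱼ θⱼ ^ xⱼ` of the counts `x`. The number of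
trials is `∑ⱼ xⱼ`, so expectations for `N` trials are sums over `Finset.piAntidiag univ N`; `θ`
takes values in an arbitrary semiring, since the moments are polynomial identities in `θ`. -/
def multinomialWeight [CommSemiring R] (θ : ι → R) (x : ι → ℕ) : R :=
  Nat.multinomial univ x * ∏ j, θ j ^ x j

variable [DecidableEq ι]

theorem sum_multinomialWeight_mul_prod_pow [CommSemiring R] (θ z : ι → R) (N : ℕ) :
    ∑ x ∈ piAntidiag univ N, multinomialWeight θ x * ∏ j, z j ^ x j = (∑ j, θ j * z j) ^ N := by
  simp only [sum_pow_eq_sum_piAntidiag, multinomialWeight, mul_pow, prod_mul_distrib, mul_assoc]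

theorem sum_multinomialWeight_mul_one_add_X_pow [CommSemiring R] (θ : ι → R) (N : ℕ) (i : ι) :
    ∑ x ∈ piAntidiag univ N, C (multinomialWeight θ x) * (1 + X) ^ x i =
      (C (∑ j, θ j) + C (θ i) * X) ^ N := by
  have hbase : ∑ j, C (θ j) * (if j = i then 1 + X else 1) = C (∑ j, θ j) + C (θ i) * X := by
    have hsplit (j : ι) : C (θ j) * (if j = i then 1 + X else 1) =
        C (θ j) + if j = i then C (θ j) * X else 0 := by
      split_ifs <;> ring
    simp only [hsplit, sum_add_distrib, sum_ite_eq', mem_univ, if_true, map_sum]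
  rw [← hbase, ← sum_multinomialWeight_mul_prod_pow]
  simp only [multinomialWeight, map_mul, map_prod, map_pow, map_natCast, ite_pow, one_pow,
    prod_ite_eq', mem_univ, if_true]

theorem sum_multinomialWeight_mul_choose [CommSemiring R] (θ : ι → R) (N : ℕ) (i : ι) (r : ℕ) :
    ∑ x ∈ piAntidiag univ N, multinomialWeight θ x * (x i).choose r =
      N.choose r * θ i ^ r * (∑ j, θ j) ^ (N - r) := by
  have hpow : (C (∑ j, θ j) + C (θ i) * X) ^ N = ((X + C (∑ j, θ j)) ^ N).comp (C (θ i) * X) := by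
    rw [pow_comp, add_comp, X_comp, C_comp, add_comm]
  have hcoeff := congrArg (coeff · r) (sum_multinomialWeight_mul_one_add_X_pow θ N i)
  simp only [hpow, finsetSum_coeff, coeff_C_mul, coeff_one_add_X_pow, comp_C_mul_X_coeff,
    coeff_X_add_C_pow] at hcoeff
  rw [hcoeff]
  ring

theorem sum_multinomialWeight [CommSemiring R] {θ : ι → R} (hθ : ∑ j, θ j = 1) (N : ℕ) :
    ∑ x ∈ piAntidiag univ N, multinomialWeight θ x = 1 := by
  simpa [hθ] using sum_multinomialWeight_mul_prod_pow θ 1 N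

theorem sum_multinomialWeight_mul_apply [CommSemiring R] {θ : ι → R} (hθ : ∑ j, θ j = 1)
    (N : ℕ) (i : ι) :
    ∑ x ∈ piAntidiag univ N, multinomialWeight θ x * x i = N * θ i := by
  simpa [hθ] using sum_multinomialWeight_mul_choose θ N i 1

theorem sum_multinomialWeight_mul_apply_sq [CommRing R] {θ : ι → R} (hθ : ∑ j, θ j = 1)
    (N : ℕ) (i : ι) :
    ∑ x ∈ piAntidiag univ N, multinomialWeight θ x * (x i : R) ^ 2 =
      N * θ i * (1 - θ i) + (N * θ i) ^ 2 := by
  have hsq (n : ℕ) : (n : R) ^ 2 = 2 * (n.choose 2 : R) + n := by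
    exact_mod_cast congrArg (Nat.cast : ℕ → R) (sq_eq_two_mul_choose_two_add n)
  calc ∑ x ∈ piAntidiag univ N, multinomialWeight θ x * (x i : R) ^ 2
      = 2 * (∑ x ∈ piAntidiag univ N, multinomialWeight θ x * (x i).choose 2) +
          ∑ x ∈ piAntidiag univ N, multinomialWeight θ x * x i := by
        simp only [hsq, mul_add, sum_add_distrib, mul_sum, mul_left_comm]
    _ = 2 * (N.choose 2 : R) * θ i ^ 2 + N * θ i := by
        rw [sum_multinomialWeight_mul_choose, sum_multinomialWeight_mul_apply hθ, hθ]
        ring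
    _ = N * θ i * (1 - θ i) + (N * θ i) ^ 2 := by
        linear_combination -θ i ^ 2 * hsq N

theorem sum_multinomialWeight_mul_sub_mean_add_sq [CommRing R] {θ : ι → R}
    (hθ : ∑ j, θ j = 1) (N : ℕ) (i : ι) (b : R) :
    ∑ x ∈ piAntidiag univ N, multinomialWeight θ x * (x i - N * θ i + b) ^ 2 =
      N * θ i * (1 - θ i) + b ^ 2 := by
  have hexpand (x : ι → ℕ) : multinomialWeight θ x * (x i - N * θ i + b) ^ 2 =
      multinomialWeight θ x * (x i : R) ^ 2 + 2 * (b - N * θ i) * (multinomialWeight θ x * x i) +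
        (b - N * θ i) ^ 2 * multinomialWeight θ x := by
    ring
  simp only [hexpand, sum_add_distrib, ← mul_sum]
  rw [sum_multinomialWeight_mul_apply_sq hθ, sum_multinomialWeight_mul_apply hθ,
    sum_multinomialWeight hθ]
  ring

end Moments

section Risk

variable {ι K : Type*} [Fintype ι] [DecidableEq ι] [Field K] {θ : ι → K}

theorem sum_multinomialWeight_mul_add_div_sub_sq (hθ : ∑ j, θ j = 1) {N : ℕ} {A : K}
    (hA : N + A ≠ 0) (a : K) (i : ι) :
    ∑ x ∈ piAntidiag univ N, multinomialWeight θ x * ((x i + a) / (N + A) - θ i) ^ 2 =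
      (N * θ i * (1 - θ i) + (a - A * θ i) ^ 2) / (N + A) ^ 2 := by
  rw [← sum_multinomialWeight_mul_sub_mean_add_sq hθ, sum_div]
  refine sum_congr rfl fun x _ ↦ ?_
  field_simp
  ring

/-- The estimator is the posterior mean for the symmetric Dirichlet prior with parameter `a`;
`a = 1` is the uniform prior. -/
theorem risk_bayes_mean_bell_state_measurements_general (hθ : ∑ j, θ j = 1) {N : ℕ} {a : K}
    (ha : N + Fintype.card ι * a ≠ 0) :
    ∑ i, ∑ x ∈ piAntidiag univ N, multinomialWeight θ x *
        ((x i + a) / (N + Fintype.card ι * a) - θ i) ^ 2 =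
      (N * (1 - ∑ i, θ i ^ 2) +
        Fintype.card ι * a ^ 2 * (Fintype.card ι * ∑ i, θ i ^ 2 - 1)) /
        (N + Fintype.card ι * a) ^ 2 := by
  have hvariance : ∑ i, N * θ i * (1 - θ i) = N * (1 - ∑ i, θ i ^ 2) := by
    simp only [mul_assoc, ← mul_sum, mul_sub, mul_one, sum_sub_distrib, hθ, sq]
  have hbias : ∑ i, (a - Fintype.card ι * a * θ i) ^ 2 =
      Fintype.card ι * a ^ 2 * (Fintype.card ι * ∑ i, θ i ^ 2 - 1) := by
    simp only [sub_sq, mul_pow, sum_add_distrib, sum_sub_distrib, ← mul_sum, hθ, sum_const,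
      card_univ, nsmul_eq_mul]
    ring
  simp only [sum_multinomialWeight_mul_add_div_sub_sq hθ ha]
  rw [← sum_div, sum_add_distrib, hvariance, hbias]

end Risk

/-- Risk of the Bayesian mean estimator `θ̂ᵢ = (Xᵢ+1)/(N+4)` (uniform prior) from `N` Bell
state measurements: for `X` multinomial with parameters `N, θ`,
`Σᵢ E[((Xᵢ+1)/(N+4) − θᵢ)²] = [N(1 − Σᵢθᵢ²) + 4(4Σᵢθᵢ² − 1)]/(N+4)²`. -/
theorem risk_bayes_mean_bell_state_measurements
    (N : ℕ) (hN : 1 ≤ N) (θ : Fin 4 → ℝ) (hθ : ∀ i, 0 ≤ θ i)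
    (hsum : ∑ i, θ i = 1) :
    ∑ i : Fin 4, ∑ x ∈ Finset.Nat.antidiagonalTuple 4 N,
        ((Nat.multinomial Finset.univ x : ℝ) * ∏ j, θ j ^ x j) *
          (((x i : ℝ) + 1) / ((N : ℝ) + 4) - θ i) ^ 2
      = ((N : ℝ) * (1 - ∑ i, θ i ^ 2) + 4 * (4 * (∑ i, θ i ^ 2) - 1)) / ((N : ℝ) + 4) ^ 2 := by
  have hcard : (N : ℝ) + Fintype.card (Fin 4) * 1 ≠ 0 := by positivity
  simpa [multinomialWeight, piAntidiag_univ_fin_eq_antidiagonalTuple] using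
    risk_bayes_mean_bell_state_measurements_general hsum hcard
end

section
/- Fix N ≥ 1. The average over the uniform prior on the probability simplex Δ = {θ ∈ ℝ⁴ : θᵢ ≥ 0, Σθᵢ = 1} of the quantity [N(1 − Σᵢθᵢ²) + 4(4Σᵢθᵢ² − 1)]/(N+4)² (the Hilbert–Schmidt risk of the Bayesian mean estimator from N Bell state measurements) equals 3/(5(N+4)). -/
open MeasureTheory

/-!
All moments of the uniform distribution on the simplex are given by Dirichlet's formula
`∫ ∏ yᵢ ^ kᵢ * (r - ∑ yᵢ) ^ m = (∏ kᵢ!) m! / (n + ∑ kᵢ + m)! * r ^ (n + ∑ kᵢ + m)`. Slicing the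
simplex of size `r` at first coordinate `x` leaves a simplex of size `r - x`, so the formula follows
by induction on the dimension from Euler's beta integral. The risk is affine in the purity `∑ θᵢ²`,
so only the moments of degree `0` and `2` are needed; with `d` outcomes they give mean purity
`2 / (d + 1)`.
-/

open scoped Nat

lemma integral_pow_mul_one_sub_pow (a b : ℕ) :
    ∫ x in (0 : ℝ)..1, x ^ a * (1 - x) ^ b = a ! * b ! / (a + b + 1)! := by
  have beta : Complex.betaIntegral (a + 1) (b + 1) = (a ! * b ! / (a + b + 1)! : ℂ) := by
    rw [Complex.betaIntegral_eq_Gamma_mul_div _ _ (by norm_cast; simp) (by norm_cast; simp),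
      Complex.Gamma_nat_eq_factorial, Complex.Gamma_nat_eq_factorial,
      ← Complex.Gamma_nat_eq_factorial (a + b + 1)]
    congr 2
    push_cast
    ring
  rw [← Complex.ofReal_inj, ← intervalIntegral.integral_ofReal]
  simpa [Complex.betaIntegral, ← Complex.cpow_natCast] using beta

lemma integral_pow_mul_sub_pow (r : ℝ) (a b : ℕ) :
    ∫ x in 0..r, x ^ a * (r - x) ^ b = a ! * b ! / (a + b + 1)! * r ^ (a + b + 1) := by
  have scale := intervalIntegral.mul_integral_comp_mul_left
    (f := fun x ↦ x ^ a * (r - x) ^ b) (a := 0) (b := 1) r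
  rw [mul_zero, mul_one] at scale
  calc ∫ x in 0..r, x ^ a * (r - x) ^ b
      = r * ∫ x in (0 : ℝ)..1, r ^ (a + b) * (x ^ a * (1 - x) ^ b) := by
        rw [← scale]
        congr 2 with x
        rw [← mul_one_sub, mul_pow, mul_pow]
        ring
    _ = a ! * b ! / (a + b + 1)! * r ^ (a + b + 1) := by
        rw [intervalIntegral.integral_const_mul, integral_pow_mul_one_sub_pow]
        ring

lemma integral_pi_eq_integral_integral_cons {n : ℕ} {α : Fin (n + 1) → Type*}
    [∀ i, MeasurableSpace (α i)] (μ : ∀ i, Measure (α i)) [∀ i, SigmaFinite (μ i)]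
    {E : Type*} [NormedAddCommGroup E] [NormedSpace ℝ E] {f : (∀ i, α i) → E}
    (hf : Integrable f (Measure.pi μ)) :
    ∫ y, f y ∂Measure.pi μ
      = ∫ x, ∫ y, f (Fin.cons x y) ∂Measure.pi (fun i : Fin n ↦ μ i.succ) ∂μ 0 := by
  have cons_preserving := (measurePreserving_piFinSuccAbove μ 0).symm
  have cons_eq (x : α 0) (y : ∀ i : Fin n, α i.succ) :
      (MeasurableEquiv.piFinSuccAbove α 0).symm (x, y) = Fin.cons x y := Fin.insertNth_zero x y
  rw [← cons_preserving.integral_comp']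
  refine (integral_prod _ (cons_preserving.integrable_comp_of_integrable hf)).trans ?_
  simp_rw [← cons_eq]
  -- `Fin.succAbove 0 i` in the library equivalence is only definitionally equal to `i.succ`.
  rfl

section CornerSimplex

variable (ι : Type*) [Fintype ι]

/-- The simplex with vertices `0` and `r • eᵢ`, which for `r = 1` parametrizes the probability
simplex by dropping one barycentric coordinate. The size `r` varies in the induction on `ι`. -/
def cornerSimplex (r : ℝ) : Set (ι → ℝ) :=
  {y | (∀ i, 0 ≤ y i) ∧ ∑ i, y i ≤ r}

lemma isCompact_cornerSimplex (r : ℝ) : IsCompact (cornerSimplex ι r) := by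
  have closed : IsClosed (cornerSimplex ι r) :=
    (isClosed_le continuous_const continuous_id).inter
      (isClosed_le (f := fun y : ι → ℝ ↦ ∑ i, y i) (by fun_prop) continuous_const)
  refine (isCompact_Icc (a := 0) (b := fun _ ↦ r)).of_isClosed_subset closed ?_
  rintro y ⟨nonneg, sum_le⟩
  exact ⟨nonneg, fun i ↦
    (Finset.single_le_sum (fun j _ ↦ nonneg j) (Finset.mem_univ i)).trans sum_le⟩

variable {ι}

lemma integrableOn_cornerSimplex {E : Type*} [NormedAddCommGroup E] {r : ℝ} {f : (ι → ℝ) → E}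
    (hf : Continuous f) : IntegrableOn f (cornerSimplex ι r) :=
  hf.continuousOn.integrableOn_compact (isCompact_cornerSimplex ι r)

lemma cornerSimplex_eq_empty {r : ℝ} (hr : r < 0) : cornerSimplex ι r = ∅ :=
  Set.eq_empty_of_forall_notMem fun _ ⟨nonneg, sum_le⟩ ↦
    (sum_le.trans_lt hr).not_ge (Finset.sum_nonneg fun i _ ↦ nonneg i)

lemma cons_mem_cornerSimplex {n : ℕ} {r x : ℝ} {y : Fin n → ℝ} :
    (Fin.cons x y : Fin (n + 1) → ℝ) ∈ cornerSimplex (Fin (n + 1)) r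
      ↔ 0 ≤ x ∧ y ∈ cornerSimplex (Fin n) (r - x) := by
  simp [cornerSimplex, Fin.forall_fin_succ, Fin.sum_univ_succ, le_sub_iff_add_le', and_assoc]

lemma setIntegral_cornerSimplex_succ {n : ℕ} {r : ℝ} (hr : 0 ≤ r) {E : Type*}
    [NormedAddCommGroup E] [NormedSpace ℝ E] {f : (Fin (n + 1) → ℝ) → E}
    (hf : IntegrableOn f (cornerSimplex (Fin (n + 1)) r)) :
    ∫ y in cornerSimplex (Fin (n + 1)) r, f y
      = ∫ x in 0..r, ∫ y in cornerSimplex (Fin n) (r - x), f (Fin.cons x y) := by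
  have measurable (m : ℕ) (s : ℝ) : MeasurableSet (cornerSimplex (Fin m) s) :=
    (isCompact_cornerSimplex _ s).measurableSet
  have slice (x : ℝ) :
      ∫ y : Fin n → ℝ, (cornerSimplex (Fin (n + 1)) r).indicator f (Fin.cons x y)
        = (Set.Icc 0 r).indicator
            (fun x ↦ ∫ y in cornerSimplex (Fin n) (r - x), f (Fin.cons x y)) x := by
    by_cases hx : 0 ≤ x
    · by_cases hxr : x ≤ r
      · rw [Set.indicator_of_mem (Set.mem_Icc.2 ⟨hx, hxr⟩), ← integral_indicator (measurable n _)]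
        classical simp [Set.indicator_apply, cons_mem_cornerSimplex, hx]
      · simp [Set.indicator, cons_mem_cornerSimplex, hxr,
          cornerSimplex_eq_empty (sub_neg.2 (not_le.1 hxr))]
    · simp [Set.indicator, cons_mem_cornerSimplex, hx]
  rw [← integral_indicator (measurable _ r), volume_pi, integral_pi_eq_integral_integral_cons _
    ((integrable_indicator_iff (measurable _ r)).2 hf), ← volume_pi]
  simp_rw [slice]
  rw [integral_indicator measurableSet_Icc, integral_Icc_eq_integral_Ioc,
    intervalIntegral.integral_of_le hr]

theorem setIntegral_cornerSimplex_prod_pow_mul_sub_sum_pow {n : ℕ} (k : Fin n → ℕ) (m : ℕ)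
    {r : ℝ} (hr : 0 ≤ r) :
    ∫ y in cornerSimplex (Fin n) r, (∏ i, y i ^ k i) * (r - ∑ i, y i) ^ m
      = (∏ i, (k i)!) * m ! / (n + ∑ i, k i + m)! * r ^ (n + ∑ i, k i + m) := by
  induction n generalizing r with
  | zero =>
    have univ : cornerSimplex (Fin 0) r = Set.univ := by simp [cornerSimplex, hr]
    simp [univ, m.factorial_ne_zero, measureReal_def, volume_pi]
  | succ n ih =>
    have integrable : IntegrableOn (fun y ↦ (∏ i, y i ^ k i) * (r - ∑ i, y i) ^ m)
        (cornerSimplex (Fin (n + 1)) r) :=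
      integrableOn_cornerSimplex (by fun_prop)
    let s := n + ∑ i : Fin n, k i.succ + m
    let C : ℝ := (∏ i : Fin n, (k i.succ)!) * m ! / (s !)
    have slice (x : ℝ) (hx : x ∈ Set.uIcc 0 r) :
        ∫ y in cornerSimplex (Fin n) (r - x),
          (∏ i, (Fin.cons x y : Fin (n + 1) → ℝ) i ^ k i)
            * (r - ∑ i, (Fin.cons x y : Fin (n + 1) → ℝ) i) ^ m
          = C * (x ^ k 0 * (r - x) ^ s) := by
      rw [Set.uIcc_of_le hr] at hx
      simp_rw [Fin.prod_univ_succ, Fin.sum_univ_succ, Fin.cons_zero, Fin.cons_succ, mul_assoc,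
        ← sub_sub]
      rw [integral_const_mul, ih _ (sub_nonneg.2 hx.2)]
      ring
    have degree : k 0 + s + 1 = n + 1 + ∑ i, k i + m := by
      rw [Fin.sum_univ_succ]
      ring
    rw [setIntegral_cornerSimplex_succ hr integrable, intervalIntegral.integral_congr slice,
      intervalIntegral.integral_const_mul, integral_pow_mul_sub_pow, degree, Fin.prod_univ_succ]
    simp only [C]
    push_cast
    field_simp

lemma volume_real_cornerSimplex (n : ℕ) {r : ℝ} (hr : 0 ≤ r) :
    volume.real (cornerSimplex (Fin n) r) = r ^ n / n ! := by
  simpa [div_eq_inv_mul] using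
    setIntegral_cornerSimplex_prod_pow_mul_sub_sum_pow (0 : Fin n → ℕ) 0 hr

lemma setIntegral_cornerSimplex_apply_sq {n : ℕ} (i : Fin n) {r : ℝ} (hr : 0 ≤ r) :
    ∫ y in cornerSimplex (Fin n) r, y i ^ 2 = 2 / (n + 2)! * r ^ (n + 2) := by
  have pow_single (y : Fin n → ℝ) : ∏ j, y j ^ (Pi.single i 2 : Fin n → ℕ) j = y i ^ 2 := by
    simp [Pi.single_apply, pow_ite]
  have factorial_single : ∏ j, ((Pi.single i 2 : Fin n → ℕ) j)! = 2 := by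
    simp [Pi.single_apply, apply_ite]
  simpa [pow_single, ← Nat.cast_prod, factorial_single] using
    setIntegral_cornerSimplex_prod_pow_mul_sub_sum_pow (Pi.single i 2) 0 hr

lemma setIntegral_cornerSimplex_sub_sum_sq (n : ℕ) {r : ℝ} (hr : 0 ≤ r) :
    ∫ y in cornerSimplex (Fin n) r, (r - ∑ i, y i) ^ 2 = 2 / (n + 2)! * r ^ (n + 2) := by
  simpa using setIntegral_cornerSimplex_prod_pow_mul_sub_sum_pow (0 : Fin n → ℕ) 2 hr

end CornerSimplex

/-- The purity `∑ θᵢ²` of the probability vector whose coordinates are those of `y` together with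
the complementary one `1 - ∑ yᵢ`. For a Bell-diagonal state with spectrum `θ` this is `Tr ρ²`. -/
def purity {ι : Type*} [Fintype ι] (y : ι → ℝ) : ℝ :=
  ∑ i, y i ^ 2 + (1 - ∑ i, y i) ^ 2

@[fun_prop]
lemma continuous_purity {ι : Type*} [Fintype ι] : Continuous (purity : (ι → ℝ) → ℝ) := by
  unfold purity
  fun_prop

lemma setIntegral_cornerSimplex_purity (n : ℕ) :
    ∫ y in cornerSimplex (Fin n) 1, purity y = 2 * (n + 1) / (n + 2)! := by
  simp_rw [purity]
  rw [integral_add (integrableOn_cornerSimplex (by fun_prop))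
    (integrableOn_cornerSimplex (by fun_prop)),
    integral_finsetSum _ fun i _ ↦ integrableOn_cornerSimplex (by fun_prop)]
  simp_rw [setIntegral_cornerSimplex_apply_sq _ zero_le_one,
    setIntegral_cornerSimplex_sub_sum_sq n zero_le_one, one_pow, mul_one, Finset.sum_const,
    Finset.card_univ, Fintype.card_fin, nsmul_eq_mul]
  ring

theorem avg_risk_bayes_mean_bell_state_measurements_general (n : ℕ) {N : ℝ}
    (hN : N + (n + 1) ≠ 0) :
    ∫ y in cornerSimplex (Fin n) 1,
        n ! * ((N * (1 - purity y) + (n + 1) * ((n + 1) * purity y - 1)) / (N + (n + 1)) ^ 2)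
      = n / ((n + 2) * (N + (n + 1))) := by
  have affine (y : Fin n → ℝ) :
      n ! * ((N * (1 - purity y) + (n + 1) * ((n + 1) * purity y - 1)) / (N + (n + 1)) ^ 2)
        = n ! / (N + (n + 1)) ^ 2 * ((N - (n + 1)) * 1 + ((n + 1) ^ 2 - N) * purity y) := by
    ring
  simp_rw [affine]
  rw [integral_const_mul,
    integral_add (integrableOn_cornerSimplex (by fun_prop))
      (integrableOn_cornerSimplex (by fun_prop)),
    integral_const_mul, integral_const_mul, setIntegral_cornerSimplex_purity,
    setIntegral_one_eq_measureReal, volume_real_cornerSimplex n zero_le_one,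
    Nat.factorial_succ, Nat.factorial_succ]
  push_cast
  field_simp
  ring

/-- The average over the uniform prior on the probability simplex
(realized by `θ₄ = 1−θ₁−θ₂−θ₃` with density `6` on `{θᵢ ≥ 0, θ₁+θ₂+θ₃ ≤ 1}`)
of the Hilbert–Schmidt risk `[N(1 − Σᵢθᵢ²) + 4(4Σᵢθᵢ² − 1)]/(N+4)²` of the
Bayesian mean estimator from `N` Bell state measurements equals `3/(5(N+4))`. -/
theorem avg_risk_bayes_mean_bell_state_measurements (N : ℕ) (hN : 1 ≤ N) :
    ∫ y in {y : Fin 3 → ℝ | (∀ i, 0 ≤ y i) ∧ y 0 + y 1 + y 2 ≤ 1},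
        6 * (((N : ℝ) * (1 - (y 0 ^ 2 + y 1 ^ 2 + y 2 ^ 2 + (1 - y 0 - y 1 - y 2) ^ 2))
              + 4 * (4 * (y 0 ^ 2 + y 1 ^ 2 + y 2 ^ 2 + (1 - y 0 - y 1 - y 2) ^ 2) - 1))
            / ((N : ℝ) + 4) ^ 2)
      = 3 / (5 * ((N : ℝ) + 4)) := by
  convert! avg_risk_bayes_mean_bell_state_measurements_general 3 (N := N) (by positivity) using 1
  · norm_num [cornerSimplex, purity, Fin.sum_univ_three, Nat.factorial, sub_sub, add_assoc]
  · norm_num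
end

section
/- Let p, q ∈ ℝ³ with |p| = |q| = 1, and let t⁽¹⁾ = (1,−1,1), t⁽²⁾ = (−1,1,1), t⁽³⁾ = (1,1,−1), t⁽⁴⁾ = (−1,−1,−1) be the Pauli parameter vectors of the four Bell states. Then the separable measurement outcome probabilities (1/4)(1 + Σⱼ pⱼqⱼ t⁽ⁱ⁾ⱼ) take only the extreme values 0 or 1/2 on all four Bell states — i.e., Σⱼ pⱼqⱼ t⁽ⁱ⁾ⱼ ∈ {−1, 1} for every i ∈ {1,2,3,4} — if and only if there exist k ∈ {1,2,3} and signs ε, δ ∈ {−1,1} such that p = ε e_k and q = δ e_k, where e_k is the k-th standard basis vector of ℝ³. -/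
/-- The Pauli parameter vectors of the four Bell states:
`t⁽¹⁾ = (1,−1,1)`, `t⁽²⁾ = (−1,1,1)`, `t⁽³⁾ = (1,1,−1)`, `t⁽⁴⁾ = (−1,−1,−1)`. -/
def bellPauliParams : Fin 4 → Fin 3 → ℝ :=
  ![![1, -1, 1], ![-1, 1, 1], ![1, 1, -1], ![-1, -1, -1]]

/-!
Write `w = p * q` and `sᵢ = ⟨w, t⁽ⁱ⁾⟩`. For `j ≠ k` one has `∑ᵢ tᵢⱼ tᵢₖ sᵢ² = 8 wⱼ wₖ`, while
`∑ᵢ tᵢⱼ tᵢₖ = 0`. Hence if all `sᵢ² = 1`, then `w` has exactly one nonzero coordinate `wₖ`, and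
`wₖ = ±1`. As `p` and `q` lie in the unit ball, `pₖ qₖ = ±1` forces `pₖ² = qₖ² = 1` and leaves no
room for any other coordinate.
-/

section Single

variable {ι R : Type*}

theorem eq_single_of_forall_ne_eq_zero [DecidableEq ι] [Zero R] {v : ι → R} {k : ι}
    (hv : ∀ j ≠ k, v j = 0) : v = Pi.single k (v k) := by
  ext j
  obtain rfl | hj := eq_or_ne j k
  · rw [Pi.single_eq_same]
  · rw [Pi.single_eq_of_ne hj, hv j hj]

theorem exists_eq_single_of_pairwise_mul_eq_zero [DecidableEq ι] [Nonempty ι] [MulZeroClass R]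
    [NoZeroDivisors R] {v : ι → R} (hv : Pairwise fun j k => v j * v k = 0) :
    ∃ k, v = Pi.single k (v k) := by
  obtain rfl | hne := eq_or_ne v 0
  · exact ⟨Classical.arbitrary ι, eq_single_of_forall_ne_eq_zero fun _ _ => rfl⟩
  · obtain ⟨k, hk⟩ := Function.ne_iff.1 hne
    exact ⟨k, eq_single_of_forall_ne_eq_zero fun j hj => (mul_eq_zero.1 (hv hj)).resolve_right hk⟩

theorem sq_le_one_of_sum_sq_le_one [Fintype ι] [Ring R] [LinearOrder R] [IsStrictOrderedRing R]
    {v : ι → R} (hv : ∑ j, v j ^ 2 ≤ 1) (k : ι) : v k ^ 2 ≤ 1 :=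
  (Finset.single_le_sum (f := fun j => v j ^ 2) (fun j _ => sq_nonneg (v j))
    (Finset.mem_univ k)).trans hv

theorem eq_single_of_sum_sq_le_one [Fintype ι] [DecidableEq ι] [Ring R] [LinearOrder R]
    [IsStrictOrderedRing R] {v : ι → R} {k : ι} (hv : ∑ j, v j ^ 2 ≤ 1) (hk : v k ^ 2 = 1) :
    v = Pi.single k (v k) :=
  eq_single_of_forall_ne_eq_zero fun j hj => by
    have hle : v j ^ 2 + v k ^ 2 ≤ 1 :=
      (Finset.add_le_sum (f := fun j => v j ^ 2) (fun j _ => sq_nonneg (v j))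
        (Finset.mem_univ j) (Finset.mem_univ k) hj).trans hv
    rw [hk, add_le_iff_nonpos_left] at hle
    exact pow_eq_zero_iff two_ne_zero |>.1 (hle.antisymm (sq_nonneg (v j)))

theorem exists_mul_eq_single_iff [Fintype ι] [DecidableEq ι] [CommRing R] [LinearOrder R]
    [IsStrictOrderedRing R] {p q : ι → R} {k : ι}
    (hp : ∑ j, p j ^ 2 ≤ 1) (hq : ∑ j, q j ^ 2 ≤ 1) :
    (∃ η, η ^ 2 = 1 ∧ p * q = Pi.single k η) ↔
      ∃ ε δ, ε ^ 2 = 1 ∧ δ ^ 2 = 1 ∧ p = Pi.single k ε ∧ q = Pi.single k δ := by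
  constructor
  · rintro ⟨η, hη, hpq⟩
    have hmul : p k ^ 2 * q k ^ 2 = 1 := by
      rw [← mul_pow, ← Pi.mul_apply, hpq, Pi.single_eq_same, hη]
    have hpk : p k ^ 2 = 1 := (sq_le_one_of_sum_sq_le_one hp k).antisymm <|
      hmul ▸ mul_le_of_le_one_right (sq_nonneg (p k)) (sq_le_one_of_sum_sq_le_one hq k)
    have hqk : q k ^ 2 = 1 := by rwa [hpk, one_mul] at hmul
    exact ⟨p k, q k, hpk, hqk, eq_single_of_sum_sq_le_one hp hpk, eq_single_of_sum_sq_le_one hq hqk⟩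
  · rintro ⟨ε, δ, hε, hδ, rfl, rfl⟩
    exact ⟨ε * δ, by rw [mul_pow, hε, hδ, one_mul], (Pi.single_mul (α := fun _ => R) k ε δ).symm⟩

end Single

section Bell

open Matrix

theorem bellPauliParams_sq (i : Fin 4) (k : Fin 3) : bellPauliParams i k ^ 2 = 1 := by
  fin_cases i <;> fin_cases k <;> simp [bellPauliParams]

theorem sum_bellPauliParams_mul_eq_zero {j k : Fin 3} (hjk : j ≠ k) :
    ∑ i, bellPauliParams i j * bellPauliParams i k = 0 := by
  fin_cases j <;> fin_cases k <;> simp [bellPauliParams, Fin.sum_univ_four] at hjk ⊢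

theorem sum_bellPauliParams_mul_dotProduct_sq (w : Fin 3 → ℝ) {j k : Fin 3} (hjk : j ≠ k) :
    ∑ i, bellPauliParams i j * bellPauliParams i k * (w ⬝ᵥ bellPauliParams i) ^ 2 =
      8 * (w j * w k) := by
  simp only [bellPauliParams, dotProduct, Fin.sum_univ_three, Fin.sum_univ_four, cons_val]
  fin_cases j <;> fin_cases k <;>
    first
    | exact absurd rfl hjk
    | simp only [Fin.zero_eta, Fin.mk_one, Fin.reduceFinMk, cons_val]
      ring

theorem single_dotProduct_bellPauliParams_sq (k : Fin 3) (η : ℝ) (i : Fin 4) :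
    (Pi.single k η ⬝ᵥ bellPauliParams i) ^ 2 = η ^ 2 := by
  rw [single_dotProduct, mul_pow, bellPauliParams_sq, mul_one]

theorem forall_dotProduct_bellPauliParams_sq_eq_one_iff {w : Fin 3 → ℝ} :
    (∀ i, (w ⬝ᵥ bellPauliParams i) ^ 2 = 1) ↔ ∃ k, ∃ η : ℝ, η ^ 2 = 1 ∧ w = Pi.single k η := by
  constructor
  · intro hw
    have hpair : Pairwise fun j k => w j * w k = 0 := fun j k hjk => by
      have hsum := sum_bellPauliParams_mul_dotProduct_sq w hjk
      simp only [hw, mul_one, sum_bellPauliParams_mul_eq_zero hjk] at hsum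
      linarith
    obtain ⟨k, hk⟩ := exists_eq_single_of_pairwise_mul_eq_zero hpair
    refine ⟨k, w k, ?_, hk⟩
    rw [← single_dotProduct_bellPauliParams_sq k (w k) 0, ← hk, hw 0]
  · rintro ⟨k, η, hη, rfl⟩ i
    rw [single_dotProduct_bellPauliParams_sq, hη]

theorem extreme_probabilities_iff_same_pauli_basis_general
    (p q : Fin 3 → ℝ) (hp : ∑ j, p j ^ 2 ≤ 1) (hq : ∑ j, q j ^ 2 ≤ 1) :
    (∀ i : Fin 4, (∑ j, p j * q j * bellPauliParams i j) = -1 ∨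
                  (∑ j, p j * q j * bellPauliParams i j) = 1)
    ↔ ∃ (k : Fin 3) (ε δ : ℝ), (ε = 1 ∨ ε = -1) ∧ (δ = 1 ∨ δ = -1) ∧
        p = (fun j => if j = k then ε else 0) ∧
        q = (fun j => if j = k then δ else 0) := by
  have hsingle (k : Fin 3) (ε : ℝ) : (fun j => if j = k then ε else 0) = Pi.single k ε :=
    funext fun j => (Pi.single_apply k ε j).symm
  simp only [hsingle, or_comm (a := _ = (-1 : ℝ)), ← sq_eq_one_iff]
  calc (∀ i, (∑ j, p j * q j * bellPauliParams i j) ^ 2 = 1)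
      ↔ ∃ k, ∃ η : ℝ, η ^ 2 = 1 ∧ p * q = Pi.single k η :=
        forall_dotProduct_bellPauliParams_sq_eq_one_iff
    _ ↔ _ := exists_congr fun _ => exists_mul_eq_single_iff hp hq

end Bell

/-- For unit vectors `p, q ∈ ℝ³`, the separable outcome probabilities
`(1/4)(1 + Σⱼ pⱼqⱼ t⁽ⁱ⁾ⱼ)` take only the extreme values `0` or `1/2` on all four
Bell states (i.e. `Σⱼ pⱼqⱼ t⁽ⁱ⁾ⱼ ∈ {−1,1}` for all `i`) iff `p = ±e_k` and `q = ±e_k`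
for some standard basis vector `e_k`, i.e. both qubits are measured in the same
Pauli basis. -/
theorem extreme_probabilities_iff_same_pauli_basis
    (p q : Fin 3 → ℝ) (hp : p 0 ^ 2 + p 1 ^ 2 + p 2 ^ 2 = 1)
    (hq : q 0 ^ 2 + q 1 ^ 2 + q 2 ^ 2 = 1) :
    (∀ i : Fin 4, (∑ j, p j * q j * bellPauliParams i j) = -1 ∨
                  (∑ j, p j * q j * bellPauliParams i j) = 1)
    ↔ ∃ (k : Fin 3) (ε δ : ℝ), (ε = 1 ∨ ε = -1) ∧ (δ = 1 ∨ δ = -1) ∧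
        p = (fun j => if j = k then ε else 0) ∧
        q = (fun j => if j = k then δ else 0) :=
  extreme_probabilities_iff_same_pauli_basis_general p q
    (by rw [Fin.sum_univ_three, hp]) (by rw [Fin.sum_univ_three, hq])
end

section
/- Fix N ≥ 1 and θ ∈ ℝ⁴ with θᵢ ≥ 0 and Σθᵢ = 1, with Pauli parameters t₁ = θ₁−θ₂+θ₃−θ₄, t₂ = −θ₁+θ₂+θ₃−θ₄, t₃ = θ₁+θ₂−θ₃−θ₄. Consider N i.i.d. random Pauli parity checks: each draw takes a value (i,j) ∈ {1,2,3}×{0,1} with probability (1 + (−1)^j tᵢ)/6. Let X_{i,j} be the number of outcomes (i,j) and Yᵢ = X_{i,0}+X_{i,1}, and define the direct inversion estimator t̂ᵢ = 0 if Yᵢ = 0 and t̂ᵢ = 2X_{i,0}/Yᵢ − 1 otherwise. Then the Hilbert–Schmidt risk R = (1/4) Σᵢ₌₁³ E[(t̂ᵢ − tᵢ)²] equals (2/3)^N { (1 − Σᵢ₌₁⁴ θᵢ²) [ (N/2) g(N) − 1 ] + 3/4 }, where g(N) = Σ_{k=0}^{N−1} C(N−1,k) 2^{−k} (k+1)^{−2}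 (which equals the generalized hypergeometric value ₃F₂(1,1,1−N;2,2;−1/2)). -/
/-!
Given `Yᵢ = y`, the count `X_{i,0}` is binomial with parameters `y` and `(1 + tᵢ) / 2`, so for
`y ≠ 0` the estimator `2 X_{i,0} / y - 1` is unbiased with variance `(1 - tᵢ ^ 2) / y`, while for
`y = 0` the squared error is `tᵢ ^ 2`. As `Yᵢ` is itself binomial with parameters `N` and `1 / 3`,
only `P(Yᵢ = 0) = (2 / 3) ^ N` and `E[Yᵢ⁻¹; Yᵢ ≠ 0]` are needed, and the absorption identity
`(k + 1) C(N, k + 1) = N C(N - 1, k)` turns the latter into the sum `g`. Finally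
`∑ tᵢ ^ 2 = 4 ∑ θᵢ ^ 2 - 1`.
-/

section BinomialExpectation

open Finset

variable {R : Type*} [CommRing R]

/-- The expectation of `f` under the binomial distribution with `n` trials and success probability
`p`. Any `p : R` is allowed, since only the algebra of the weights matters. -/
noncomputable def binomialExpectation (p : R) (n : ℕ) (f : ℕ → R) : R :=
  ∑ k ∈ range (n + 1), (bernsteinPolynomial R n k).eval p * f k

lemma binomialExpectation_eq_sum_choose (p : R) (n : ℕ) (f : ℕ → R) :
    binomialExpectation p n f =
      ∑ k ∈ range (n + 1), (n.choose k : R) * (p ^ k * (1 - p) ^ (n - k) * f k) := by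
  simp [binomialExpectation, bernsteinPolynomial, mul_assoc]

lemma binomialExpectation_zero (p : R) (f : ℕ → R) : binomialExpectation p 0 f = f 0 := by
  simp [binomialExpectation_eq_sum_choose]

lemma binomialExpectation_add (p : R) (n : ℕ) (f g : ℕ → R) :
    binomialExpectation p n (fun k => f k + g k) =
      binomialExpectation p n f + binomialExpectation p n g := by
  simp only [binomialExpectation, mul_add, sum_add_distrib]

lemma binomialExpectation_const_mul (p c : R) (n : ℕ) (f : ℕ → R) :
    binomialExpectation p n (fun k => c * f k) = c * binomialExpectation p n f := by
  simp only [binomialExpectation, mul_sum, mul_left_comm]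

lemma binomialExpectation_succ (p : R) (n : ℕ) (f : ℕ → R) :
    binomialExpectation p (n + 1) f =
      (1 - p) * binomialExpectation p n f + p * binomialExpectation p n (fun k => f (k + 1)) := by
  simp only [binomialExpectation_eq_sum_choose, mul_sum]
  rw [sum_choose_succ_mul (fun k m => p ^ k * (1 - p) ^ m * f k)]
  congr 1 <;> refine sum_congr rfl fun k hk => ?_
  · rw [Nat.succ_sub (Nat.lt_succ_iff.mp (mem_range.mp hk)), pow_succ]
    ring
  · ring

lemma binomialExpectation_ite_eq_zero (p : R) (n : ℕ) :
    binomialExpectation p n (fun k => if k = 0 then 1 else 0) = (1 - p) ^ n := by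
  simp [binomialExpectation_eq_sum_choose]

lemma binomialExpectation_sq_sub_mean (p : R) (n : ℕ) :
    binomialExpectation p n (fun k => (k - n * p) ^ 2) = n * p * (1 - p) := by
  have h := congrArg (Polynomial.eval p) (bernsteinPolynomial.variance R n)
  simp only [nsmul_eq_mul, Polynomial.eval_finsetSum, Polynomial.eval_mul, Polynomial.eval_pow,
    Polynomial.eval_sub, Polynomial.eval_natCast, Polynomial.eval_X, Polynomial.eval_one] at h
  rw [← h]
  exact sum_congr rfl fun k _ => by ring

-- The value at `k = 0` does not contribute, as `0⁻¹ = 0`.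
lemma binomialExpectation_inv {K : Type*} [Field K] [CharZero K] {p : K} (hp : p ≠ 1) (n : ℕ) :
    binomialExpectation p n (fun k => (k : K)⁻¹) =
      (1 - p) ^ n * (n * (p / (1 - p)) *
        ∑ k ∈ range n, ((n - 1).choose k : K) * (p / (1 - p)) ^ k / ((k : K) + 1) ^ 2) := by
  cases n with
  | zero => simp [binomialExpectation_zero]
  | succ n =>
    rw [binomialExpectation_eq_sum_choose, sum_range_succ']
    simp only [Nat.cast_zero, inv_zero, mul_zero, add_zero, mul_sum, Nat.add_sub_cancel]
    refine sum_congr rfl fun k hk => ?_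
    have absorb : ((n + 1).choose (k + 1) : K) = (n + 1) * n.choose k / (k + 1) := by
      rw [eq_div_iff (Nat.cast_add_one_ne_zero k)]
      exact_mod_cast (Nat.add_one_mul_choose_eq n k).symm
    obtain ⟨m, rfl⟩ := Nat.exists_eq_add_of_le (Nat.lt_succ_iff.mp (mem_range.mp hk))
    rw [absorb, show k + m + 1 - (k + 1) = m by omega]
    push_cast [div_pow]
    field_simp
    ring

end BinomialExpectation

section IIDExpectation

open Finset

lemma card_filter_cons {α : Type*} {N : ℕ} (P : α → Prop) [DecidablePred P] (a : α)
    (ω : Fin N → α) :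
    #{n | P (Fin.cons (α := fun _ => α) a ω n)} = #{n | P (ω n)} + if P a then 1 else 0 := by
  rw [Fin.card_filter_univ_succ', add_comm]
  rfl

variable {R α : Type*} [CommRing R] [Fintype α]

/-- The expectation of `F` over `N` independent draws from `α`, each with the weights `w`. These are
arbitrary elements of `R`, not required to sum to `1`. -/
def iidExpectation (w : α → R) (N : ℕ) (F : (Fin N → α) → R) : R :=
  ∑ ω : Fin N → α, (∏ n, w (ω n)) * F ω

lemma iidExpectation_succ (w : α → R) (N : ℕ) (F : (Fin (N + 1) → α) → R) :
    iidExpectation w (N + 1) F =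
      ∑ a, w a * iidExpectation w N (fun ω => F (Fin.cons a ω)) := by
  simp only [iidExpectation, mul_sum]
  rw [← (Fin.consEquiv fun _ => α).sum_comp, Fintype.sum_prod_type]
  simp [Fin.consEquiv, Fin.prod_univ_succ, mul_assoc]

lemma sum_mul_ite_ite_of_imp (w : α → R) (P Q : α → Prop) [DecidablePred P] [DecidablePred Q]
    (hQP : ∀ a, Q a → P a) (u v z : R) :
    ∑ a, w a * (if Q a then u else if P a then v else z) =
      (∑ a with Q a, w a) * u + (∑ a with P a, w a - ∑ a with Q a, w a) * v +
        (∑ a, w a - ∑ a with P a, w a) * z := by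
  simp only [sum_filter, sub_mul, sum_mul, ← sum_sub_distrib, ← sum_add_distrib]
  refine sum_congr rfl fun a _ => ?_
  by_cases hQ : Q a
  · simp [hQ, hQP a hQ]
  · by_cases hP : P a <;> simp [hQ, hP]

lemma iidExpectation_card_card_of_imp (w : α → R) (P Q : α → Prop)
    [DecidablePred P] [DecidablePred Q] (hQP : ∀ a, Q a → P a) {p q : R}
    (hw : ∑ a, w a = 1) (hP : ∑ a with P a, w a = q)
    (hQ : ∑ a with Q a, w a = q * p) (N : ℕ) (F : ℕ → ℕ → R) :
    iidExpectation w N (fun ω => F #{n | Q (ω n)} #{n | P (ω n)}) =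
      binomialExpectation q N (fun y => binomialExpectation p y (fun x => F x y)) := by
  induction N generalizing F with
  | zero => simp [iidExpectation, binomialExpectation_zero]
  | succ N ih =>
    have step (a : α) :
        iidExpectation w N (fun ω => F (#{n | Q (ω n)} + if Q a then 1 else 0)
          (#{n | P (ω n)} + if P a then 1 else 0)) =
        if Q a then binomialExpectation q N (fun y => binomialExpectation p y
          (fun x => F (x + 1) (y + 1)))
        else if P a then binomialExpectation q N (fun y => binomialExpectation p y
          (fun x => F x (y + 1)))
        else binomialExpectation q N (fun y => binomialExpectation p y (fun x => F x y)) := by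
      rw [ih fun x y => F (x + if Q a then 1 else 0) (y + if P a then 1 else 0)]
      by_cases hQa : Q a
      · simp [hQa, hQP a hQa]
      · by_cases hPa : P a <;> simp [hQa, hPa]
    simp only [iidExpectation_succ, card_filter_cons, step]
    rw [sum_mul_ite_ite_of_imp w P Q hQP, hw, hP, hQ, binomialExpectation_succ q]
    simp only [binomialExpectation_succ p, binomialExpectation_add, binomialExpectation_const_mul]
    ring

end IIDExpectation

section DirectInversion

open Finset

variable {K : Type*} [Field K]

/-- The direct inversion estimate of a Pauli parameter from `y` parity checks in its basis, `x` of
which had outcome `0`. -/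
def directInversion (x y : ℕ) : K :=
  if y = 0 then 0 else 2 * x / y - 1

variable [CharZero K]

lemma binomialExpectation_sq_directInversion_sub (t : K) (y : ℕ) :
    binomialExpectation ((1 + t) / 2) y (fun x => (directInversion x y - t) ^ 2) =
      t ^ 2 * (if y = 0 then 1 else 0) + (1 - t ^ 2) * (y : K)⁻¹ := by
  rcases eq_or_ne y 0 with rfl | hy
  · simp [binomialExpectation_zero, directInversion]
  have centered (x : ℕ) : (directInversion x y - t) ^ 2 =
      (2 / y) ^ 2 * ((x : K) - y * ((1 + t) / 2)) ^ 2 := by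
    simp only [directInversion, if_neg hy]
    field_simp
    ring
  simp only [centered, binomialExpectation_const_mul, binomialExpectation_sq_sub_mean, if_neg hy]
  field_simp
  ring

lemma iidExpectation_sq_directInversion_sub {α : Type*} [Fintype α] (w : α → K)
    (P Q : α → Prop) [DecidablePred P] [DecidablePred Q] (hQP : ∀ a, Q a → P a) {q t : K}
    (hq : q ≠ 1) (hw : ∑ a, w a = 1) (hP : ∑ a with P a, w a = q)
    (hQ : ∑ a with Q a, w a = q * ((1 + t) / 2)) (N : ℕ) :
    iidExpectation w N
        (fun ω => (directInversion #{n | Q (ω n)} #{n | P (ω n)} - t) ^ 2) =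
      (1 - q) ^ N * (t ^ 2 + (1 - t ^ 2) * (N * (q / (1 - q)) *
        ∑ k ∈ range N, ((N - 1).choose k : K) * (q / (1 - q)) ^ k / ((k : K) + 1) ^ 2)) := by
  rw [iidExpectation_card_card_of_imp w P Q hQP hw hP hQ N fun x y => (directInversion x y - t) ^ 2]
  simp only [binomialExpectation_sq_directInversion_sub, binomialExpectation_add,
    binomialExpectation_const_mul, binomialExpectation_ite_eq_zero, binomialExpectation_inv hq]
  ring

end DirectInversion

section ParityCheck

open Finset

variable {K ι : Type*} [Field K] [Fintype ι]

/-- The probability of the outcome `a = (i, j)` of a parity check whose basis `i` is drawn uniformly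
from `ι` and whose parity `j` has mean sign `t i`. -/
def parityCheckWeight (t : ι → K) (a : ι × Fin 2) : K :=
  (1 + (-1) ^ (a.2 : ℕ) * t a.1) / (2 * Fintype.card ι)

variable [CharZero K]

lemma sum_parityCheckWeight_mk (t : ι → K) (i : ι) :
    ∑ j, parityCheckWeight t (i, j) = 1 / Fintype.card ι := by
  simp only [parityCheckWeight, Fin.sum_univ_two, Fin.val_zero, Fin.val_one]
  field_simp
  ring

lemma sum_parityCheckWeight [Nonempty ι] (t : ι → K) : ∑ a, parityCheckWeight t a = 1 := by
  simp [Fintype.sum_prod_type, sum_parityCheckWeight_mk, -Fin.sum_univ_two]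

lemma sum_parityCheckWeight_fst_eq [DecidableEq ι] (t : ι → K) (i : ι) :
    ∑ a with a.1 = i, parityCheckWeight t a = 1 / Fintype.card ι := by
  rw [← sum_parityCheckWeight_mk t i, sum_filter, Fintype.sum_prod_type_right]
  simp

lemma sum_parityCheckWeight_eq_mk_zero [DecidableEq ι] (t : ι → K) (i : ι) :
    ∑ a with a = (i, 0), parityCheckWeight t a = 1 / Fintype.card ι * ((1 + t i) / 2) := by
  rw [filter_eq' univ (i, 0), if_pos (mem_univ _), sum_singleton]
  simp only [parityCheckWeight, Fin.val_zero, pow_zero, one_mul]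
  field_simp

lemma iidExpectation_parityCheckWeight_sq_directInversion_sub [DecidableEq ι] [Nontrivial ι]
    (t : ι → K) (i : ι) (N : ℕ) :
    iidExpectation (parityCheckWeight t) N
        (fun ω => (directInversion #{n | ω n = (i, 0)} #{n | (ω n).1 = i} - t i) ^ 2) =
      (1 - 1 / Fintype.card ι) ^ N * (t i ^ 2 + (1 - t i ^ 2) * (N / (Fintype.card ι - 1) *
        ∑ k ∈ range N,
          ((N - 1).choose k : K) * (1 / (Fintype.card ι - 1)) ^ k / ((k : K) + 1) ^ 2)) := by
  have one_div_card_ne_one : 1 / (Fintype.card ι : K) ≠ 1 := by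
    simpa using Fintype.one_lt_card.ne'
  have odds : 1 / (Fintype.card ι : K) / (1 - 1 / Fintype.card ι) = 1 / (Fintype.card ι - 1) := by
    field_simp
  rw [iidExpectation_sq_directInversion_sub (parityCheckWeight t) (fun a => a.1 = i)
    (fun a => a = (i, 0)) (fun a ha => congrArg Prod.fst ha) one_div_card_ne_one
    (sum_parityCheckWeight t) (sum_parityCheckWeight_fst_eq t i)
    (sum_parityCheckWeight_eq_mk_zero t i), odds, mul_one_div]

end ParityCheck

lemma sum_sq_pauliParameters {R : Type*} [CommRing R] (θ : Fin 4 → R) (hsum : ∑ i, θ i = 1)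
    (t : Fin 3 → R)
    (ht1 : t 0 = θ 0 - θ 1 + θ 2 - θ 3)
    (ht2 : t 1 = -θ 0 + θ 1 + θ 2 - θ 3)
    (ht3 : t 2 = θ 0 + θ 1 - θ 2 - θ 3) :
    ∑ i, t i ^ 2 = 4 * ∑ i, θ i ^ 2 - 1 := by
  rw [← one_pow 2, ← hsum]
  simp only [Fin.sum_univ_three, Fin.sum_univ_four, ht1, ht2, ht3]
  ring

theorem risk_direct_inversion_random_parity_checks_general
    {K : Type*} [Field K] [CharZero K] (N : ℕ)
    (θ : Fin 4 → K) (hsum : ∑ i, θ i = 1)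
    (t : Fin 3 → K)
    (ht1 : t 0 = θ 0 - θ 1 + θ 2 - θ 3)
    (ht2 : t 1 = -θ 0 + θ 1 + θ 2 - θ 3)
    (ht3 : t 2 = θ 0 + θ 1 - θ 2 - θ 3)
    (g : K)
    (hg : g = ∑ k ∈ Finset.range N, ((N - 1).choose k : K) * (1 / 2) ^ k / ((k : K) + 1) ^ 2) :
    (1 / 4 : K) * ∑ i : Fin 3, ∑ ω : Fin N → Fin 3 × Fin 2,
        (∏ n, (1 + (-1 : K) ^ (((ω n).2 : ℕ)) * t (ω n).1) / 6) *
          ((if (Finset.univ.filter fun n => (ω n).1 = i).card = 0 then (0 : K)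
            else 2 * ((Finset.univ.filter fun n => ω n = (i, 0)).card : K) /
                ((Finset.univ.filter fun n => (ω n).1 = i).card : K) - 1) - t i) ^ 2
      = (2 / 3 : K) ^ N *
          ((1 - ∑ i : Fin 4, θ i ^ 2) * ((N : K) / 2 * g - 1) + 3 / 4) := by
  calc
    _ = 1 / 4 * ∑ i, iidExpectation (parityCheckWeight t) N fun ω =>
          (directInversion (Finset.univ.filter fun n => ω n = (i, 0)).card
            (Finset.univ.filter fun n => (ω n).1 = i).card - t i) ^ 2 := by
      norm_num [iidExpectation, parityCheckWeight, directInversion]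
    _ = 1 / 4 * ∑ i, (2 / 3) ^ N * (t i ^ 2 + (1 - t i ^ 2) * (N / 2 * g)) := by
      simp only [iidExpectation_parityCheckWeight_sq_directInversion_sub, Fintype.card_fin, hg]
      norm_num
    _ = (2 / 3) ^ N * (∑ i, t i ^ 2 + (3 - ∑ i, t i ^ 2) * (N / 2 * g)) / 4 := by
      simp only [Fin.sum_univ_three]
      ring
    _ = _ := by
      rw [sum_sq_pauliParameters θ hsum t ht1 ht2 ht3]
      ring

/-- Risk of direct inversion from `N` i.i.d. random Pauli parity checks on the Bell
diagonal state with eigenvalues `θ` and Pauli parameters `t`.  Each draw yields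
`(i,j) ∈ {1,2,3}×{0,1}` with probability `(1+(−1)ʲtᵢ)/6`; with `X_{i,j}` the outcome
counts, `Yᵢ = X_{i,0}+X_{i,1}`, and `t̂ᵢ = 0` if `Yᵢ = 0`, `t̂ᵢ = 2X_{i,0}/Yᵢ − 1` else,
the Hilbert–Schmidt risk `(1/4)Σᵢ E[(t̂ᵢ−tᵢ)²]` equals
`(2/3)^N {(1−Σθᵢ²)[(N/2)g(N) − 1] + 3/4}` with
`g(N) = Σ_{k<N} C(N−1,k) 2^{−k}(k+1)^{−2}`. -/
theorem risk_direct_inversion_random_parity_checks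
    (N : ℕ) (hN : 1 ≤ N)
    (θ : Fin 4 → ℝ) (hθ : ∀ i, 0 ≤ θ i) (hsum : ∑ i, θ i = 1)
    (t : Fin 3 → ℝ)
    (ht1 : t 0 = θ 0 - θ 1 + θ 2 - θ 3)
    (ht2 : t 1 = -θ 0 + θ 1 + θ 2 - θ 3)
    (ht3 : t 2 = θ 0 + θ 1 - θ 2 - θ 3)
    (g : ℝ)
    (hg : g = ∑ k ∈ Finset.range N, ((N - 1).choose k : ℝ) * (1/2) ^ k / ((k : ℝ) + 1) ^ 2) :
    (1/4 : ℝ) * ∑ i : Fin 3, ∑ ω : Fin N → Fin 3 × Fin 2,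
        (∏ n, (1 + (-1 : ℝ) ^ (((ω n).2 : ℕ)) * t (ω n).1) / 6) *
          ((if (Finset.univ.filter fun n => (ω n).1 = i).card = 0 then (0 : ℝ)
            else 2 * ((Finset.univ.filter fun n => ω n = (i, 0)).card : ℝ) /
                ((Finset.univ.filter fun n => (ω n).1 = i).card : ℝ) - 1) - t i) ^ 2
      = (2/3 : ℝ) ^ N *
          ((1 - ∑ i : Fin 4, θ i ^ 2) * ((N : ℝ) / 2 * g - 1) + 3/4) :=
  risk_direct_inversion_random_parity_checks_general N θ hsum t ht1 ht2 ht3 g hg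
end
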